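/- For fixed z in the open unit ball 𝔹 ⊂ ℂⁿ, let s(ζ,z) = (1/2πi)·∂|ζ|²/(|ζ|² − ζ̄·z) and let χ be a cutoff function that is 1 near the closed ball. Then the form g = χ − ∂̄χ ∧ s/∇_η s = χ − ∂̄χ ∧ Σ_{k=1}^n (1/(2πi)^k) ∂|ζ|²∧(∂̄∂|ζ|²)^{k−1}/(|ζ|²−ζ̄·z)^k is well defined (the denominator |ζ|²−ζ̄·z is nonvanishing on supp ∂̄χ for z ∈ 𝔹), has compact support, satisfies ∇_η g = 0 where ∇_η = δ_η − ∂̄, its (0,0)-component satisfies g_{0,0}(z) = 1, and g depends holomorphically on z. -/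

import Mathlib

open Complex Metric

noncomputable section

/-! A coordinate model for the Cauchy-type form `g`.  Forms in `ζ ∈ ℂⁿ` are modeled in
the exterior algebra over `EuclideanSpace ℂ (Fin n) × EuclideanSpace ℂ (Fin n)`: the
first factor carries the holomorphic differentials `dζ_t`, the second the
antiholomorphic differentials `dζ̄_t`. -/

variable (n : ℕ)

/-- The model algebra of forms. -/
abbrev FA := ExteriorAlgebra ℂ (EuclideanSpace ℂ (Fin n) × EuclideanSpace ℂ (Fin n))

/-- The differential `dζ_t`. -/
def dz (t : Fin n) : FA n := ExteriorAlgebra.ι ℂ (EuclideanSpace.single t 1, 0)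

/-- The differential `dζ̄_t`. -/
def dzbar (t : Fin n) : FA n := ExteriorAlgebra.ι ℂ (0, EuclideanSpace.single t 1)

/-- The `t`-th antiholomorphic derivative `∂g/∂ζ̄_t` of a scalar function. -/
def dbarDir (t : Fin n) (g : EuclideanSpace ℂ (Fin n) → ℂ) (ζ : EuclideanSpace ℂ (Fin n)) : ℂ :=
  (fderiv ℝ g ζ (EuclideanSpace.single t 1) + I * fderiv ℝ g ζ (EuclideanSpace.single t I)) / 2

/-- The denominator `|ζ|² − ζ̄·z`. -/
def den (z ζ : EuclideanSpace ℂ (Fin n)) : ℂ :=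
  (∑ t, (starRingEnd ℂ) (ζ t) * ζ t) - ∑ t, (starRingEnd ℂ) (ζ t) * z t

/-- The `(1,0)`-form `∂|ζ|² = ∑_t ζ̄_t dζ_t`. -/
def pBase (ζ : EuclideanSpace ℂ (Fin n)) : FA n := ∑ t, (starRingEnd ℂ) (ζ t) • dz n t

/-- The `(1,1)`-form `∂̄∂|ζ|² = ∑_t dζ̄_t ∧ dζ_t`. -/
def bBase : FA n := ∑ t, dzbar n t * dz n t

/-- `∂̄χ = ∑_t (∂χ/∂ζ̄_t) dζ̄_t`. -/
def dbarChi (χ : EuclideanSpace ℂ (Fin n) → ℝ) (ζ : EuclideanSpace ℂ (Fin n)) : FA n :=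
  ∑ t, dbarDir n t (fun y => (χ y : ℂ)) ζ • dzbar n t

/-- The form `s = (2πi)⁻¹ ∂|ζ|² / (|ζ|² − ζ̄·z)`. -/
def sForm (z ζ : EuclideanSpace ℂ (Fin n)) : FA n :=
  ((2 * Real.pi * I) * den n z ζ)⁻¹ • pBase n ζ

/-- The Cauchy-type form
`g = χ − ∂̄χ ∧ ∑_{k=1}^n (2πi)^{-k} ∂|ζ|² ∧ (∂̄∂|ζ|²)^{k−1} / (|ζ|²−ζ̄·z)^k`. -/
def gForm (χ : EuclideanSpace ℂ (Fin n) → ℝ) (z ζ : EuclideanSpace ℂ (Fin n)) : FA n :=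
  ((χ ζ : ℂ)) • 1 -
    dbarChi n χ ζ *
      ∑ k ∈ Finset.Icc 1 n,
        (((2 * Real.pi * I) ^ k * (den n z ζ) ^ k)⁻¹) • (pBase n ζ * bBase n ^ (k - 1))

/-- Interior multiplication `δ_η` by the vector field `2πi ∑_t (ζ_t − z_t) ∂/∂ζ_t`:
contraction sending `dζ_t` to `2πi (ζ_t − z_t)` and `dζ̄_t` to `0`. -/
def contrEta (z ζ : EuclideanSpace ℂ (Fin n)) : FA n →ₗ[ℂ] FA n :=
  CliffordAlgebra.contractLeft
    (Q := (0 : QuadraticForm ℂ (EuclideanSpace ℂ (Fin n) × EuclideanSpace ℂ (Fin n))))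
    (∑ t, ((2 * Real.pi * I) * (ζ t - z t)) •
      ((EuclideanSpace.proj t).toLinearMap.comp
        (LinearMap.fst ℂ (EuclideanSpace ℂ (Fin n)) (EuclideanSpace ℂ (Fin n)))))

/-- `v` is `∂̄` of the form-valued function `u` on `S`. -/
def IsDbarOn (S : Set (EuclideanSpace ℂ (Fin n)))
    (u v : EuclideanSpace ℂ (Fin n) → FA n) : Prop :=
  ∃ w : Fin n → EuclideanSpace ℂ (Fin n) → FA n,
    (∀ ζ ∈ S, v ζ = ∑ t, dzbar n t * w t ζ) ∧
    ∀ (t : Fin n) (ℓ : FA n →ₗ[ℂ] ℂ), ∀ ζ ∈ S,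
      ℓ (w t ζ) = dbarDir n t (fun y => ℓ (u y)) ζ

section Helpers

variable {n : ℕ}

lemma iota_anti (x y : EuclideanSpace ℂ (Fin n) × EuclideanSpace ℂ (Fin n)) :
    (ExteriorAlgebra.ι ℂ x : FA n) * ExteriorAlgebra.ι ℂ y
      = -(ExteriorAlgebra.ι ℂ y * ExteriorAlgebra.ι ℂ x) :=
  eq_neg_of_add_eq_zero_left (ExteriorAlgebra.ι_add_mul_swap x y)

lemma beta_comm_iota (t : Fin n) (m : EuclideanSpace ℂ (Fin n) × EuclideanSpace ℂ (Fin n)) :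
    Commute (dzbar n t * dz n t) (ExteriorAlgebra.ι ℂ m : FA n) := by
  unfold dzbar dz Commute SemiconjBy
  rw [mul_assoc, iota_anti _ m, mul_neg, ← mul_assoc, iota_anti _ m, neg_mul, neg_neg, mul_assoc]

lemma beta_comm_beta (t s : Fin n) :
    Commute (dzbar n t * dz n t) (dzbar n s * dz n s) :=
  (beta_comm_iota t _).mul_right (beta_comm_iota t _)

lemma dz_sq (t : Fin n) : dz n t * dz n t = 0 := ExteriorAlgebra.ι_sq_zero _

lemma beta_sq (t : Fin n) : (dzbar n t * dz n t) ^ 2 = 0 := by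
  have h' : Commute (dzbar n t * dz n t) (dzbar n t) := beta_comm_iota t _
  rw [pow_two, ← mul_assoc, h'.eq, mul_assoc, mul_assoc (dzbar n t),
    dz_sq, mul_zero, mul_zero]

lemma dz_mul_beta (t : Fin n) : dz n t * (dzbar n t * dz n t) = 0 := by
  have h : Commute (dzbar n t * dz n t) (dz n t) := beta_comm_iota t _
  rw [← h.eq, mul_assoc, dz_sq, mul_zero]

lemma bBase_comm_iota (m : EuclideanSpace ℂ (Fin n) × EuclideanSpace ℂ (Fin n)) :
    Commute (bBase n) (ExteriorAlgebra.ι ℂ m : FA n) :=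
  Commute.sum_left _ _ _ fun t _ => beta_comm_iota t m

lemma sum_beta_pow (S : Finset (Fin n)) :
    (∑ t ∈ S, dzbar n t * dz n t) ^ (S.card + 1) = 0 := by
  classical
  induction S using Finset.induction_on with
  | empty => simp
  | insert a S ha ih =>
    rw [Finset.sum_insert ha, Finset.card_insert_of_notMem ha]
    have hc : Commute (dzbar n a * dz n a) (∑ t ∈ S, dzbar n t * dz n t) :=
      Commute.sum_right _ _ _ fun t _ => beta_comm_beta a t
    exact hc.add_pow_eq_zero_of_add_le_succ_of_pow_eq_zero (beta_sq a) ih (by omega)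

lemma dz_mul_bBase_pow (t : Fin n) : dz n t * bBase n ^ n = 0 := by
  classical
  set b' : FA n := ∑ s ∈ Finset.univ.erase t, dzbar n s * dz n s with hb'
  have hb : bBase n = dzbar n t * dz n t + b' := by
    rw [hb', bBase, Finset.add_sum_erase _ (fun s => dzbar n s * dz n s) (Finset.mem_univ t)]
  have hb'0 : b' ^ n = 0 := by
    have h := sum_beta_pow (Finset.univ.erase t)
    rw [Finset.card_erase_of_mem (Finset.mem_univ t), Finset.card_univ, Fintype.card_fin] at h
    have hn : 0 < n := t.pos
    rwa [Nat.sub_add_cancel hn] at h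
  have key : ∀ k : ℕ, dz n t * bBase n ^ k = dz n t * b' ^ k := by
    intro k
    induction k with
    | zero => simp
    | succ k ih =>
      have hc : Commute b' (bBase n) := by
        rw [hb', bBase]
        exact Commute.sum_left _ _ _ fun s _ => Commute.sum_right _ _ _ fun r _ =>
          beta_comm_beta s r
      rw [pow_succ, ← mul_assoc, ih, mul_assoc, (hc.pow_left k).eq, ← mul_assoc, hb, mul_add,
        dz_mul_beta, zero_add, mul_assoc, ← pow_succ']
  rw [key, hb'0, mul_zero]

lemma pBase_mul_bBase_pow (ζ : EuclideanSpace ℂ (Fin n)) : pBase n ζ * bBase n ^ n = 0 := by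
  rw [pBase, Finset.sum_mul]
  exact Finset.sum_eq_zero fun t _ => by rw [smul_mul_assoc, dz_mul_bBase_pow, smul_zero]

/-- The form `∂̄(|ζ|² − ζ̄·z)`. -/
def qForm (z ζ : EuclideanSpace ℂ (Fin n)) : FA n := ∑ t, (ζ t - z t) • dzbar n t

lemma contr_one (z ζ : EuclideanSpace ℂ (Fin n)) : contrEta n z ζ 1 = 0 :=
  CliffordAlgebra.contractLeft_one _ _

lemma contr_dz (z ζ : EuclideanSpace ℂ (Fin n)) (t : Fin n) (a : FA n) :
    contrEta n z ζ (dz n t * a)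
      = ((2 * Real.pi * I) * (ζ t - z t)) • a - dz n t * contrEta n z ζ a := by
  unfold contrEta dz
  refine (CliffordAlgebra.contractLeft_ι_mul _ _ _).trans ?_
  congr 2
  simp [LinearMap.sum_apply]

lemma contr_dzbar (z ζ : EuclideanSpace ℂ (Fin n)) (t : Fin n) (a : FA n) :
    contrEta n z ζ (dzbar n t * a) = - (dzbar n t * contrEta n z ζ a) := by
  unfold contrEta dzbar
  refine (CliffordAlgebra.contractLeft_ι_mul _ _ _).trans ?_
  rw [← zero_sub]
  congr 1
  simp [LinearMap.sum_apply]

lemma contr_pBase (z ζ : EuclideanSpace ℂ (Fin n)) (a : FA n) :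
    contrEta n z ζ (pBase n ζ * a)
      = ((2 * Real.pi * I) * den n z ζ) • a - pBase n ζ * contrEta n z ζ a := by
  unfold pBase den
  simp only [Finset.sum_mul, map_sum, smul_mul_assoc, map_smul, contr_dz, smul_sub,
    Finset.sum_sub_distrib]
  congr 1
  rw [← Finset.sum_sub_distrib, Finset.mul_sum, Finset.sum_smul]
  refine Finset.sum_congr rfl fun t _ => ?_
  rw [smul_smul]
  congr 1
  ring

lemma contr_bBase (z ζ : EuclideanSpace ℂ (Fin n)) (a : FA n) :
    contrEta n z ζ (bBase n * a)
      = bBase n * contrEta n z ζ a - (2 * Real.pi * I : ℂ) • (qForm z ζ * a) := by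
  unfold bBase qForm
  simp only [Finset.sum_mul, map_sum, mul_assoc (dzbar n _), contr_dzbar, contr_dz, Finset.smul_sum,
    ← Finset.sum_sub_distrib]
  refine Finset.sum_congr rfl fun t _ => ?_
  rw [mul_sub, mul_smul_comm, smul_mul_assoc, smul_smul, neg_sub]

lemma bBase_comm_qForm (z ζ : EuclideanSpace ℂ (Fin n)) : Commute (bBase n) (qForm z ζ) :=
  Commute.sum_right _ _ _ fun _ _ => (bBase_comm_iota _).smul_right _

lemma bBase_comm_pBase (ζ : EuclideanSpace ℂ (Fin n)) : Commute (bBase n) (pBase n ζ) :=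
  Commute.sum_right _ _ _ fun _ _ => (bBase_comm_iota _).smul_right _

lemma contr_bBase_pow (z ζ : EuclideanSpace ℂ (Fin n)) (k : ℕ) :
    contrEta n z ζ (bBase n ^ k)
      = -(((k : ℂ) * (2 * Real.pi * I)) • (qForm z ζ * bBase n ^ (k - 1))) := by
  induction k with
  | zero => simp [contr_one]
  | succ k ih =>
    rw [pow_succ', contr_bBase, ih]
    rcases k with _ | k
    · simp
    · simp only [Nat.add_sub_cancel]
      rw [mul_neg, mul_smul_comm, ← mul_assoc (bBase n), (bBase_comm_qForm z ζ).eq, mul_assoc (qForm z ζ), ← pow_succ',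
        ← neg_add', ← add_smul]
      congr 2
      push_cast
      ring

lemma qForm_mul_pBase (z ζ : EuclideanSpace ℂ (Fin n)) :
    qForm z ζ * pBase n ζ = - (pBase n ζ * qForm z ζ) := by
  unfold qForm pBase
  rw [Finset.sum_mul_sum, Finset.sum_mul_sum, Finset.sum_comm, ← Finset.sum_neg_distrib]
  refine Finset.sum_congr rfl fun t _ => ?_
  rw [← Finset.sum_neg_distrib]
  refine Finset.sum_congr rfl fun s _ => ?_
  simp only [smul_mul_assoc, mul_smul_comm, dz, dzbar]
  rw [iota_anti, smul_neg, smul_neg, smul_comm]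

/-- The coefficient of the `k`-th term of the form `s/∇s`. -/
def coef (z ζ : EuclideanSpace ℂ (Fin n)) (k : ℕ) : ℂ :=
  ((2 * Real.pi * I) ^ k * (den n z ζ) ^ k)⁻¹

/-- The `k`-th term of the form `s/∇s`. -/
def uTerm (z ζ : EuclideanSpace ℂ (Fin n)) (k : ℕ) : FA n :=
  coef z ζ k • (pBase n ζ * bBase n ^ (k - 1))

/-- The derivative of `coef` along `ζ̄_t`. -/
def coefD (z ζ : EuclideanSpace ℂ (Fin n)) (k : ℕ) (t : Fin n) : ℂ :=
  - (k : ℂ) * (ζ t - z t) * (coef z ζ k * (den n z ζ)⁻¹)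

/-- The derivative of `uTerm` along `ζ̄_t`. -/
def uTermD (z ζ : EuclideanSpace ℂ (Fin n)) (k : ℕ) (t : Fin n) : FA n :=
  coef z ζ k • (dz n t * bBase n ^ (k - 1)) + coefD z ζ k t • (pBase n ζ * bBase n ^ (k - 1))

lemma contr_uTerm_succ (z ζ : EuclideanSpace ℂ (Fin n)) (hd : den n z ζ ≠ 0) (k : ℕ) :
    contrEta n z ζ (uTerm z ζ (k + 1)) = coef z ζ k • bBase n ^ k +
      ((k : ℂ) * (coef z ζ k * (den n z ζ)⁻¹)) • (pBase n ζ * (qForm z ζ * bBase n ^ (k - 1))) := by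
  have hc : (2 * Real.pi * I : ℂ) ≠ 0 := Complex.two_pi_I_ne_zero
  unfold uTerm coef
  rw [map_smul, Nat.add_sub_cancel, contr_pBase, contr_bBase_pow, mul_neg, sub_neg_eq_add, smul_add,
    smul_smul, mul_smul_comm, smul_smul]
  congr 2
  · field_simp
    ring
  · field_simp
    ring

lemma sum_uTermD (z ζ : EuclideanSpace ℂ (Fin n)) (hd : den n z ζ ≠ 0) (k : ℕ) (hk : 1 ≤ k) :
    ∑ t, dzbar n t * uTermD z ζ k t = contrEta n z ζ (uTerm z ζ (k + 1)) := by
  rw [contr_uTerm_succ z ζ hd]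
  obtain ⟨k, rfl⟩ := Nat.exists_eq_add_of_le' hk
  simp only [uTermD, mul_add, Finset.sum_add_distrib, Nat.add_sub_cancel]
  congr 1
  · rw [pow_succ' (bBase n)]
    nth_rw 2 [bBase]
    rw [Finset.sum_mul, Finset.smul_sum]
    exact Finset.sum_congr rfl fun t _ => by rw [mul_smul_comm, mul_assoc]
  · have : ∀ t, dzbar n t * coefD z ζ (k+1) t • (pBase n ζ * bBase n ^ k)
        = (-(((k + 1 : ℕ) : ℂ) * (coef z ζ (k+1) * (den n z ζ)⁻¹))) •
          (((ζ t - z t) • dzbar n t) * (pBase n ζ * bBase n ^ k)) := by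
      intro t
      rw [mul_smul_comm, smul_mul_assoc, smul_smul, coefD]
      congr 1
      ring
    rw [Finset.sum_congr rfl fun t _ => this t, ← Finset.smul_sum, ← Finset.sum_mul]
    change _ • (qForm z ζ * _) = _
    rw [← mul_assoc (qForm z ζ), qForm_mul_pBase, neg_mul, smul_neg, neg_smul, neg_neg, mul_assoc (pBase n ζ)]

lemma nabla_u (z ζ : EuclideanSpace ℂ (Fin n)) (hd : den n z ζ ≠ 0) :
    contrEta n z ζ (∑ k ∈ Finset.Icc 1 n, uTerm z ζ k)
      - ∑ t, dzbar n t * ∑ k ∈ Finset.Icc 1 n, uTermD z ζ k t = 1 := by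
  have h1 : ∀ m : ℕ, ∑ k ∈ Finset.Icc 1 m,
      (contrEta n z ζ (uTerm z ζ k) - contrEta n z ζ (uTerm z ζ (k + 1)))
      = contrEta n z ζ (uTerm z ζ 1) - contrEta n z ζ (uTerm z ζ (m + 1)) := by
    intro m
    induction m with
    | zero => simp
    | succ m ih => rw [Finset.sum_Icc_succ_top (by omega), ih]; abel
  have h2 : ∑ t, dzbar n t * ∑ k ∈ Finset.Icc 1 n, uTermD z ζ k t
      = ∑ k ∈ Finset.Icc 1 n, contrEta n z ζ (uTerm z ζ (k + 1)) := by
    simp only [Finset.mul_sum]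
    rw [Finset.sum_comm]
    exact Finset.sum_congr rfl fun k hk => sum_uTermD z ζ hd k (Finset.mem_Icc.1 hk).1
  rw [h2, map_sum, ← Finset.sum_sub_distrib, h1]
  have h3 : uTerm z ζ (n + 1) = 0 := by
    rw [uTerm, Nat.add_sub_cancel, pBase_mul_bBase_pow, smul_zero]
  rw [h3, map_zero, sub_zero, ← zero_add 1, contr_uTerm_succ z ζ hd]
  simp [coef]

/-- `f` is real differentiable at `ζ` with `∂f/∂ζ̄_t = a`. -/
def SD (t : Fin n) (f : EuclideanSpace ℂ (Fin n) → ℂ) (ζ : EuclideanSpace ℂ (Fin n)) (a : ℂ) :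
    Prop :=
  DifferentiableAt ℝ f ζ ∧ dbarDir n t f ζ = a

/-- Weak form-valued version of `SD`. -/
def WD (t : Fin n) (u : EuclideanSpace ℂ (Fin n) → FA n) (ζ : EuclideanSpace ℂ (Fin n))
    (w : FA n) : Prop :=
  ∀ ℓ : FA n →ₗ[ℂ] ℂ, SD t (fun y => ℓ (u y)) ζ (ℓ w)

lemma SD.add {t : Fin n} {f g : EuclideanSpace ℂ (Fin n) → ℂ} {ζ : EuclideanSpace ℂ (Fin n)}
    {a b : ℂ} (hf : SD t f ζ a) (hg : SD t g ζ b) : SD t (fun y => f y + g y) ζ (a + b) := by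
  refine ⟨hf.1.add hg.1, ?_⟩
  rw [← hf.2, ← hg.2, dbarDir, dbarDir, dbarDir, fderiv_fun_add hf.1 hg.1]
  simp only [_root_.add_apply]
  ring

lemma SD.const (t : Fin n) (c : ℂ) (ζ : EuclideanSpace ℂ (Fin n)) :
    SD t (fun _ => c) ζ 0 := by
  refine ⟨differentiableAt_const _, ?_⟩
  simp [dbarDir]

lemma SD.mul {t : Fin n} {f g : EuclideanSpace ℂ (Fin n) → ℂ} {ζ : EuclideanSpace ℂ (Fin n)}
    {a b : ℂ} (hf : SD t f ζ a) (hg : SD t g ζ b) :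
    SD t (fun y => f y * g y) ζ (a * g ζ + f ζ * b) := by
  refine ⟨hf.1.mul hg.1, ?_⟩
  rw [← hf.2, ← hg.2, dbarDir, dbarDir, dbarDir, fderiv_fun_mul hf.1 hg.1]
  simp only [_root_.add_apply, _root_.smul_apply, smul_eq_mul]
  ring

lemma SD.sum {ι : Type*} {t : Fin n} {f : ι → EuclideanSpace ℂ (Fin n) → ℂ}
    {ζ : EuclideanSpace ℂ (Fin n)} {a : ι → ℂ} (S : Finset ι) (h : ∀ i ∈ S, SD t (f i) ζ (a i)) :
    SD t (fun y => ∑ i ∈ S, f i y) ζ (∑ i ∈ S, a i) := by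
  classical
  induction S using Finset.induction_on with
  | empty => simpa using SD.const t 0 ζ
  | insert i S hi ih =>
    simp only [Finset.sum_insert hi]
    exact (h i (Finset.mem_insert_self _ _)).add
      (ih fun j hj => h j (Finset.mem_insert_of_mem hj))

lemma SD.comp {t : Fin n} {f : EuclideanSpace ℂ (Fin n) → ℂ} {ζ : EuclideanSpace ℂ (Fin n)}
    {a : ℂ} (hf : SD t f ζ a) {h : ℂ → ℂ} {h' : ℂ} (hh : HasDerivAt h h' (f ζ)) :
    SD t (fun y => h (f y)) ζ (h' * a) := by
  have h1 : HasFDerivAt (fun y => h (f y)) _ ζ :=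
    (hh.hasFDerivAt.restrictScalars ℝ).comp ζ hf.1.hasFDerivAt
  refine ⟨h1.differentiableAt, ?_⟩
  rw [← hf.2, dbarDir, dbarDir, h1.fderiv]
  simp
  ring

lemma SD.congr {t : Fin n} {f g : EuclideanSpace ℂ (Fin n) → ℂ} {ζ : EuclideanSpace ℂ (Fin n)}
    {a : ℂ} (hf : SD t f ζ a) (h : g =ᶠ[nhds ζ] f) : SD t g ζ a := by
  refine ⟨hf.1.congr_of_eventuallyEq h, ?_⟩
  rw [← hf.2, dbarDir, dbarDir, h.fderiv_eq]

lemma SD_coord (t s : Fin n) (ζ : EuclideanSpace ℂ (Fin n)) : SD t (fun y => y s) ζ 0 := by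
  have h1 : HasFDerivAt (fun y : EuclideanSpace ℂ (Fin n) => y s)
      ((EuclideanSpace.proj s : EuclideanSpace ℂ (Fin n) →L[ℂ] ℂ).restrictScalars ℝ) ζ :=
    ((EuclideanSpace.proj s : EuclideanSpace ℂ (Fin n) →L[ℂ] ℂ).restrictScalars ℝ).hasFDerivAt
  refine ⟨h1.differentiableAt, ?_⟩
  rw [dbarDir, h1.fderiv]
  by_cases h : s = t
  · subst h; simp
  · simp [h]

lemma SD_conj (t s : Fin n) (ζ : EuclideanSpace ℂ (Fin n)) :
    SD t (fun y => (starRingEnd ℂ) (y s)) ζ (if s = t then 1 else 0) := by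
  have h1 : HasFDerivAt (fun y : EuclideanSpace ℂ (Fin n) => (starRingEnd ℂ) (y s))
      ((Complex.conjCLE : ℂ →L[ℝ] ℂ).comp
        ((EuclideanSpace.proj s : EuclideanSpace ℂ (Fin n) →L[ℂ] ℂ).restrictScalars ℝ)) ζ :=
    ((Complex.conjCLE : ℂ →L[ℝ] ℂ).comp
      ((EuclideanSpace.proj s : EuclideanSpace ℂ (Fin n) →L[ℂ] ℂ).restrictScalars ℝ)).hasFDerivAt
  refine ⟨h1.differentiableAt, ?_⟩
  rw [dbarDir, h1.fderiv]
  by_cases h : s = t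
  · subst h; simp
  · simp [h]

lemma den_eq (z ζ : EuclideanSpace ℂ (Fin n)) :
    den n z ζ = ∑ s, (starRingEnd ℂ) (ζ s) * (ζ s + - z s) := by
  simp only [den, mul_add, Finset.sum_add_distrib, mul_neg, Finset.sum_neg_distrib, sub_eq_add_neg]

lemma SD_den (t : Fin n) (z ζ : EuclideanSpace ℂ (Fin n)) :
    SD t (fun y => den n z y) ζ (ζ t - z t) := by
  simp only [den_eq]
  have h := SD.sum (t := t) (ζ := ζ) Finset.univ fun s _ =>
    (SD_conj t s ζ).mul ((SD_coord t s ζ).add (SD.const t (- z s) ζ))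
  convert h using 1
  simp [sub_eq_add_neg]

lemma SD_coef (t : Fin n) (z ζ : EuclideanSpace ℂ (Fin n)) (hd : den n z ζ ≠ 0) (k : ℕ) :
    SD t (fun y => coef z y k) ζ (coefD z ζ k t) := by
  have hc : (2 * Real.pi * I : ℂ) ≠ 0 := Complex.two_pi_I_ne_zero
  have h0 : HasDerivAt (fun x : ℂ => ((2 * Real.pi * I) ^ k * x ^ k)⁻¹)
      (-((2 * Real.pi * I) ^ k * (k * (den n z ζ) ^ (k - 1))) /
        ((2 * Real.pi * I) ^ k * (den n z ζ) ^ k) ^ 2) (den n z ζ) :=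
    ((hasDerivAt_pow k (den n z ζ)).const_mul _).inv
      (mul_ne_zero (pow_ne_zero _ hc) (pow_ne_zero _ hd))
  have h := (SD_den t z ζ).comp h0
  refine ⟨h.1, h.2.trans ?_⟩
  unfold coefD coef
  rcases k with _ | k
  · simp
  · simp only [Nat.add_sub_cancel]
    field_simp
    ring

lemma WD.add {t : Fin n} {f g : EuclideanSpace ℂ (Fin n) → FA n} {ζ : EuclideanSpace ℂ (Fin n)}
    {a b : FA n} (hf : WD t f ζ a) (hg : WD t g ζ b) : WD t (fun y => f y + g y) ζ (a + b) := by
  intro ℓ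
  simp only [map_add]
  exact (hf ℓ).add (hg ℓ)

lemma WD.sum {ι : Type*} {t : Fin n} {f : ι → EuclideanSpace ℂ (Fin n) → FA n}
    {ζ : EuclideanSpace ℂ (Fin n)} {a : ι → FA n} (S : Finset ι)
    (h : ∀ i ∈ S, WD t (f i) ζ (a i)) :
    WD t (fun y => ∑ i ∈ S, f i y) ζ (∑ i ∈ S, a i) := by
  intro ℓ
  simp only [map_sum]
  exact SD.sum S fun i hi => h i hi ℓ

lemma WD.const (t : Fin n) (c : FA n) (ζ : EuclideanSpace ℂ (Fin n)) :
    WD t (fun _ => c) ζ 0 := by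
  intro ℓ
  rw [map_zero]
  exact SD.const t _ ζ

lemma WD.smul {t : Fin n} {f : EuclideanSpace ℂ (Fin n) → ℂ}
    {u : EuclideanSpace ℂ (Fin n) → FA n} {ζ : EuclideanSpace ℂ (Fin n)}
    {a : ℂ} {b : FA n} (hf : SD t f ζ a) (hg : WD t u ζ b) :
    WD t (fun y => f y • u y) ζ (a • u ζ + f ζ • b) := by
  intro ℓ
  simp only [map_smul, map_add, smul_eq_mul]
  exact hf.mul (hg ℓ)

lemma WD.map {t : Fin n} {u : EuclideanSpace ℂ (Fin n) → FA n} {ζ : EuclideanSpace ℂ (Fin n)}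
    {b : FA n} (hg : WD t u ζ b) (L : FA n →ₗ[ℂ] FA n) : WD t (fun y => L (u y)) ζ (L b) :=
  fun ℓ => hg (ℓ.comp L)

lemma WD_pBase (t : Fin n) (ζ : EuclideanSpace ℂ (Fin n)) :
    WD t (fun y => pBase n y) ζ (dz n t) := by
  have h := WD.sum (t := t) (ζ := ζ) Finset.univ fun s _ =>
    WD.smul (SD_conj t s ζ) (WD.const t (dz n s) ζ)
  unfold pBase
  convert h using 1
  simp

lemma WD_uTerm (t : Fin n) (z ζ : EuclideanSpace ℂ (Fin n)) (hd : den n z ζ ≠ 0) (k : ℕ) :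
    WD t (fun y => uTerm z y k) ζ (uTermD z ζ k t) := by
  have h := WD.smul (SD_coef t z ζ hd k)
    ((WD_pBase t ζ).map (LinearMap.mulRight ℂ (bBase n ^ (k - 1))))
  unfold uTerm uTermD
  rw [add_comm]
  exact h

/-- Second antiholomorphic derivatives of the cutoff. -/
lemma SD_dbar (χ : EuclideanSpace ℂ (Fin n) → ℝ) (hχ : ContDiff ℝ (⊤ : ℕ∞) χ)
    (ζ : EuclideanSpace ℂ (Fin n)) :
    ∃ H : Fin n → Fin n → ℂ, (∀ t s, H t s = H s t) ∧
      ∀ t s, SD t (fun y => dbarDir n s (fun y => (χ y : ℂ)) y) ζ (H t s) := by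
  set f : EuclideanSpace ℂ (Fin n) → ℂ := fun y => (χ y : ℂ) with hf
  have hfs : ContDiff ℝ (⊤ : ℕ∞) f := Complex.ofRealCLM.contDiff.comp hχ
  have hsym : IsSymmSndFDerivAt ℝ f ζ := by
    refine (hfs.contDiffAt).isSymmSndFDerivAt ?_
    rw [minSmoothness_of_isRCLikeNormedField]
    exact WithTop.coe_le_coe.2 (le_top : (2 : ℕ∞) ≤ ⊤)
  have hd : DifferentiableAt ℝ (fderiv ℝ f) ζ :=
    ((hfs.fderiv_right (m := 1) (WithTop.coe_le_coe.2 (le_top : (1 + 1 : ℕ∞) ≤ ⊤))).differentiable one_ne_zero) ζ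
  have hv : ∀ v : EuclideanSpace ℂ (Fin n),
      HasFDerivAt (fun y => fderiv ℝ f y v) ((fderiv ℝ (fderiv ℝ f) ζ).flip v) ζ := by
    intro v
    exact ((ContinuousLinearMap.apply ℝ ℂ v).hasFDerivAt.comp ζ hd.hasFDerivAt)
  have hs : ∀ s : Fin n, HasFDerivAt (fun y => dbarDir n s f y)
      ((2 : ℂ)⁻¹ • ((fderiv ℝ (fderiv ℝ f) ζ).flip (EuclideanSpace.single s 1) +
        I • (fderiv ℝ (fderiv ℝ f) ζ).flip (EuclideanSpace.single s I))) ζ := by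
    intro s
    have h := ((hv (EuclideanSpace.single s 1)).add
      ((hv (EuclideanSpace.single s I)).const_smul I)).const_smul (2 : ℂ)⁻¹
    refine h.congr_of_eventuallyEq (Filter.Eventually.of_forall fun y => ?_)
    simp [dbarDir, div_eq_inv_mul]
  refine ⟨fun t s => dbarDir n t (fun y => dbarDir n s f y) ζ, fun t s => ?_, fun t s =>
    ⟨(hs s).differentiableAt, rfl⟩⟩
  simp only []
  rw [dbarDir, dbarDir, (hs s).fderiv, (hs t).fderiv]
  simp only [_root_.smul_apply, _root_.add_apply,
    ContinuousLinearMap.flip_apply, smul_eq_mul]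
  rw [hsym (EuclideanSpace.single t 1) (EuclideanSpace.single s 1),
    hsym (EuclideanSpace.single t 1) (EuclideanSpace.single s I),
    hsym (EuclideanSpace.single t I) (EuclideanSpace.single s 1),
    hsym (EuclideanSpace.single t I) (EuclideanSpace.single s I)]
  ring

lemma contr_dbarChi (χ : EuclideanSpace ℂ (Fin n) → ℝ) (z ζ : EuclideanSpace ℂ (Fin n))
    (a : FA n) :
    contrEta n z ζ (dbarChi n χ ζ * a) = - (dbarChi n χ ζ * contrEta n z ζ a) := by
  unfold dbarChi
  simp only [Finset.sum_mul, map_sum, smul_mul_assoc, map_smul, contr_dzbar, smul_neg,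
    Finset.sum_neg_distrib]

lemma gForm_eq (χ : EuclideanSpace ℂ (Fin n) → ℝ) (z ζ : EuclideanSpace ℂ (Fin n)) :
    gForm n χ z ζ = (χ ζ : ℂ) • 1 - dbarChi n χ ζ * ∑ k ∈ Finset.Icc 1 n, uTerm z ζ k := rfl

lemma sum_symm_zero (H : Fin n → Fin n → ℂ) (hH : ∀ t s, H t s = H s t) (a : FA n) :
    ∑ t, dzbar n t * ∑ s, H t s • (dzbar n s * a) = 0 := by
  have h1 : ∑ t, dzbar n t * ∑ s, H t s • (dzbar n s * a)
      = ∑ t, ∑ s, H t s • (dzbar n t * dzbar n s * a) := by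
    simp only [Finset.mul_sum, mul_smul_comm, mul_assoc]
  have h2 : ∑ t, ∑ s, H t s • (dzbar n t * dzbar n s * a)
      = - ∑ t, ∑ s, H t s • (dzbar n t * dzbar n s * a) := by
    conv_lhs => rw [Finset.sum_comm]
    rw [← Finset.sum_neg_distrib]
    refine Finset.sum_congr rfl fun t _ => ?_
    rw [← Finset.sum_neg_distrib]
    refine Finset.sum_congr rfl fun s _ => ?_
    rw [hH s t, ← smul_neg, ← neg_mul]
    unfold dzbar
    rw [iota_anti]
  rw [h1]
  rw [eq_neg_iff_add_eq_zero, ← two_smul ℂ] at h2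
  exact (smul_eq_zero.1 h2).resolve_left two_ne_zero

lemma WD.unique {t : Fin n} {u : EuclideanSpace ℂ (Fin n) → FA n} {ζ : EuclideanSpace ℂ (Fin n)}
    {a b : FA n} (hu : WD t u ζ a)
    (hb : ∀ ℓ : FA n →ₗ[ℂ] ℂ, ℓ b = dbarDir n t (fun y => ℓ (u y)) ζ) : b = a := by
  rw [← sub_eq_zero, ← Module.forall_dual_apply_eq_zero_iff ℂ]
  intro ℓ
  rw [map_sub, hb ℓ, (hu ℓ).2, sub_self]

lemma nabla_g_den (χ : EuclideanSpace ℂ (Fin n) → ℝ) (hχ : ContDiff ℝ (⊤ : ℕ∞) χ)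
    (z ζ : EuclideanSpace ℂ (Fin n)) (hd : den n z ζ ≠ 0) (w : Fin n → FA n)
    (hw : ∀ t, ∀ ℓ : FA n →ₗ[ℂ] ℂ, ℓ (w t) = dbarDir n t (fun y => ℓ (gForm n χ z y)) ζ) :
    contrEta n z ζ (gForm n χ z ζ) = ∑ t, dzbar n t * w t := by
  obtain ⟨H, hH, hHs⟩ := SD_dbar χ hχ ζ
  set U : FA n := ∑ k ∈ Finset.Icc 1 n, uTerm z ζ k with hU
  set V : Fin n → FA n := fun t => ∑ k ∈ Finset.Icc 1 n, uTermD z ζ k t with hV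
  have hUV : ∀ t, WD t (fun y => ∑ k ∈ Finset.Icc 1 n, uTerm z y k) ζ (V t) := fun t =>
    WD.sum _ fun k _ => WD_uTerm t z ζ hd k
  have hχd : DifferentiableAt ℝ (fun y => (χ y : ℂ)) ζ :=
    (Complex.ofRealCLM.differentiableAt).comp ζ ((hχ.differentiable (by simp)) ζ)
  have hwt : ∀ t, w t = dbarDir n t (fun y => (χ y : ℂ)) ζ • (1 : FA n)
      + -(∑ s, H t s • (dzbar n s * U) + dbarChi n χ ζ * V t) := by
    intro t
    refine WD.unique ?_ (hw t)
    have h1 : WD t (fun y => (χ y : ℂ) • (1 : FA n)) ζ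
        (dbarDir n t (fun y => (χ y : ℂ)) ζ • (1 : FA n)) := by
      simpa using WD.smul (t := t) ⟨hχd, rfl⟩ (WD.const t (1 : FA n) ζ)
    have h2 := WD.sum (t := t) (ζ := ζ) Finset.univ fun s _ =>
      WD.smul (hHs t s) ((hUV t).map (LinearMap.mulLeft ℂ (dzbar n s)))
    have h3 := h1.add (h2.map (-LinearMap.id))
    convert h3 using 1
    · funext y
      simp only [gForm_eq, dbarChi, LinearMap.neg_apply, LinearMap.id_apply,
        LinearMap.mulLeft_apply, Finset.sum_mul, smul_mul_assoc, sub_eq_add_neg]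
    · simp only [dbarChi, LinearMap.neg_apply, LinearMap.id_apply,
        LinearMap.mulLeft_apply, Finset.sum_mul, smul_mul_assoc, Finset.sum_add_distrib, hU]
  have hsum : ∑ t, dzbar n t * w t
      = dbarChi n χ ζ + dbarChi n χ ζ * ∑ t, dzbar n t * V t := by
    simp only [hwt, mul_add, mul_neg, neg_add, Finset.sum_add_distrib, Finset.sum_neg_distrib]
    rw [sum_symm_zero H hH, neg_zero, zero_add]
    congr 1
    · simp [dbarChi]
    · rw [← Finset.sum_neg_distrib, Finset.mul_sum]
      refine Finset.sum_congr rfl fun t _ => ?_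
      rw [← mul_assoc, ← mul_assoc, ← neg_mul]
      congr 1
      rw [dbarChi, Finset.mul_sum, Finset.sum_mul, ← Finset.sum_neg_distrib]
      refine Finset.sum_congr rfl fun s _ => ?_
      rw [mul_smul_comm, smul_mul_assoc, ← smul_neg]
      unfold dzbar
      rw [← iota_anti]
  rw [hsum, gForm_eq, map_sub, map_smul, contr_one, smul_zero, zero_sub, contr_dbarChi, neg_neg]
  have hn := nabla_u z ζ hd
  rw [sub_eq_iff_eq_add] at hn
  rw [hn, mul_add, mul_one]

lemma dbarChi_congr (χ : EuclideanSpace ℂ (Fin n) → ℝ) (ζ : EuclideanSpace ℂ (Fin n)) (c : ℝ)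
    (h : ∀ᶠ y in nhds ζ, χ y = c) : dbarChi n χ ζ = 0 := by
  refine Finset.sum_eq_zero fun t _ => ?_
  have h1 : (fun y => (χ y : ℂ)) =ᶠ[nhds ζ] fun _ => (c : ℂ) := by
    filter_upwards [h] with y hy
    rw [hy]
  rw [((SD.const t (c : ℂ) ζ).congr h1).2, zero_smul]

lemma gForm_of_one (χ : EuclideanSpace ℂ (Fin n) → ℝ) (z ζ : EuclideanSpace ℂ (Fin n))
    (h : ∀ᶠ y in nhds ζ, χ y = 1) : gForm n χ z ζ = 1 := by
  rw [gForm_eq, dbarChi_congr χ ζ 1 h, h.self_of_nhds]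
  simp

lemma nabla_g_one (χ : EuclideanSpace ℂ (Fin n) → ℝ)
    (z ζ : EuclideanSpace ℂ (Fin n)) (h : ∀ᶠ y in nhds ζ, χ y = 1) (w : Fin n → FA n)
    (hw : ∀ t, ∀ ℓ : FA n →ₗ[ℂ] ℂ, ℓ (w t) = dbarDir n t (fun y => ℓ (gForm n χ z y)) ζ) :
    contrEta n z ζ (gForm n χ z ζ) = ∑ t, dzbar n t * w t := by
  have h0 : ∀ t, w t = 0 := by
    intro t
    refine WD.unique ?_ (hw t)
    intro ℓ
    rw [map_zero]
    refine (SD.const t (ℓ 1) ζ).congr ?_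
    filter_upwards [h.eventually_nhds] with y hy
    rw [gForm_of_one χ z y hy]
  rw [gForm_of_one χ z ζ h, contr_one]
  simp [h0]

lemma den_ne_zero (z : EuclideanSpace ℂ (Fin n))
    (hz : z ∈ ball (0 : EuclideanSpace ℂ (Fin n)) 1) (ζ : EuclideanSpace ℂ (Fin n))
    (hζ : 1 ≤ ‖ζ‖) : den n z ζ ≠ 0 := by
  have h1 : den n z ζ = inner ℂ ζ ζ - inner ℂ ζ z := by
    simp only [den, PiLp.inner_apply, RCLike.inner_apply, mul_comm]
  intro h
  rw [h1, sub_eq_zero, inner_self_eq_norm_sq_to_K] at h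
  have h2 : ‖ζ‖ ^ 2 ≤ ‖ζ‖ * ‖z‖ := by
    have h3 := norm_inner_le_norm (𝕜 := ℂ) ζ z
    rw [← h] at h3
    simpa using h3
  rw [mem_ball_zero_iff] at hz
  nlinarith

end Helpers

/-- **The properties of the Cauchy-type form `g`** (from the construction of division
formulas): for `z` in the unit ball and a cutoff `χ` which is `1` near the closed unit
ball, (i) the denominator `|ζ|² − ζ̄·z` is nonvanishing for `‖ζ‖ ≥ 1` (so `g` is
well defined on `supp ∂̄χ`); (ii) `g` has compact support in `ζ`; (iii) `δ_η s = 1`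
wherever the denominator is nonvanishing; (iv) `∇_η g = δ_η g − ∂̄ g = 0` on the open
set where `g` is smooth; (v) the `(0,0)`-component of `g` at `ζ = z` equals `1`;
(vi) `g` depends holomorphically on `z ∈ 𝔹`. -/
theorem cauchy_form_properties
    (χ : EuclideanSpace ℂ (Fin n) → ℝ)
    (hχsmooth : ContDiff ℝ (⊤ : ℕ∞) χ)
    (hχone : ∀ᶠ ζ in nhdsSet (closedBall (0 : EuclideanSpace ℂ (Fin n)) 1), χ ζ = 1)
    (hχsupp : HasCompactSupport χ)
    (z : EuclideanSpace ℂ (Fin n)) (hz : z ∈ ball (0 : EuclideanSpace ℂ (Fin n)) 1) :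
    (∀ ζ : EuclideanSpace ℂ (Fin n), 1 ≤ ‖ζ‖ → den n z ζ ≠ 0) ∧
    (HasCompactSupport fun ζ => gForm n χ z ζ) ∧
    (∀ ζ : EuclideanSpace ℂ (Fin n), den n z ζ ≠ 0 →
      contrEta n z ζ (sForm n z ζ) = 1) ∧
    (∀ v : EuclideanSpace ℂ (Fin n) → FA n,
      IsDbarOn n ({ζ | den n z ζ ≠ 0} ∪ interior {ζ | χ ζ = 1}) (gForm n χ z) v →
      ∀ ζ ∈ ({ζ | den n z ζ ≠ 0} ∪ interior {ζ | χ ζ = 1} :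
          Set (EuclideanSpace ℂ (Fin n))),
        contrEta n z ζ (gForm n χ z ζ) - v ζ = 0) ∧
    (ExteriorAlgebra.algebraMapInv (gForm n χ z z) = 1) ∧
    (∀ (ζ : EuclideanSpace ℂ (Fin n)) (ℓ : FA n →ₗ[ℂ] ℂ),
      AnalyticOnNhd ℂ (fun w => ℓ (gForm n χ w ζ))
        (ball (0 : EuclideanSpace ℂ (Fin n)) 1)) := by
  have hone : ∀ ζ : EuclideanSpace ℂ (Fin n), ‖ζ‖ ≤ 1 → ∀ᶠ y in nhds ζ, χ y = 1 := by
    intro ζ hζ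
    exact (eventually_nhdsSet_iff_forall.1 hχone) ζ (by simpa using hζ)
  refine ⟨den_ne_zero z hz, ?_, ?_, ?_, ?_, ?_⟩
  · refine HasCompactSupport.intro hχsupp fun ζ hζ => ?_
    have h0 : ∀ᶠ y in nhds ζ, χ y = 0 := notMem_tsupport_iff_eventuallyEq.1 hζ
    rw [gForm_eq, dbarChi_congr χ ζ 0 h0, h0.self_of_nhds]
    simp
  · intro ζ hd
    have h := contr_pBase z ζ 1
    rw [mul_one, contr_one, mul_zero, sub_zero] at h
    rw [sForm, map_smul, h, smul_smul,
      inv_mul_cancel₀ (mul_ne_zero Complex.two_pi_I_ne_zero hd), one_smul]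
  · rintro v ⟨w, hv, hw⟩ ζ hζ
    rw [sub_eq_zero, hv ζ hζ]
    rcases hζ with hd | h1
    · exact nabla_g_den χ hχsmooth z ζ hd (fun t => w t ζ) fun t ℓ => hw t ℓ ζ (Or.inl hd)
    · exact nabla_g_one χ z ζ (mem_interior_iff_mem_nhds.1 h1) (fun t => w t ζ)
        fun t ℓ => hw t ℓ ζ (Or.inr h1)
  · rw [gForm_of_one χ z z (hone z (by rw [mem_ball_zero_iff] at hz; exact hz.le)), map_one]
  · intro ζ ℓ
    rcases le_or_gt ‖ζ‖ 1 with h | h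
    · have : (fun w => ℓ (gForm n χ w ζ)) = fun _ => ℓ 1 := by
        funext w
        rw [gForm_of_one χ w ζ (hone ζ h)]
      rw [this]
      exact analyticOnNhd_const
    · intro w hw
      have hd : den n w ζ ≠ 0 := den_ne_zero w hw ζ h.le
      have hden : AnalyticAt ℂ (fun w => den n w ζ) w := by
        unfold den
        refine analyticAt_const.sub (Finset.analyticAt_fun_sum _ fun t _ => ?_)
        exact analyticAt_const.mul
          ((EuclideanSpace.proj t : EuclideanSpace ℂ (Fin n) →L[ℂ] ℂ).analyticAt w)
      have hEq : (fun w => ℓ (gForm n χ w ζ)) = fun w => (χ ζ : ℂ) * ℓ 1 -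
          ∑ k ∈ Finset.Icc 1 n, ((2 * Real.pi * I) ^ k * (den n w ζ) ^ k)⁻¹ *
            ℓ (dbarChi n χ ζ * (pBase n ζ * bBase n ^ (k - 1))) := by
        funext w
        simp only [gForm, map_sub, map_smul, Finset.mul_sum, map_sum, mul_smul_comm, smul_eq_mul]
      rw [hEq]
      refine analyticAt_const.sub (Finset.analyticAt_fun_sum _ fun k _ => ?_)
      exact ((analyticAt_const.mul (hden.pow k)).inv
        (mul_ne_zero (pow_ne_zero _ Complex.two_pi_I_ne_zero) (pow_ne_zero _ hd))).mul
        analyticAt_const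

end
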